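/- arXiv:1806.08425 — 6 statements merged into one kernel-verified Lean document; each statement's English description precedes it below -/
import Mathlib

section
/- Let Λ be a commutative finite-dimensional local k-algebra with residue field k, and let R be an arbitrary commutative k-algebra with 1. Then every idempotent of Λ_R = Λ ⊗_k R lies in the subalgebra 1 ⊗ R; that is, the only idempotents of Λ ⊗_k R are those of the form 1 ⊗ e with e an idempotent of R. -/
/-!
Since the residue field of `Λ` is `k`, reduction modulo the maximal ideal is an augmentation
`π : Λ → k`, with nilpotent kernel because `Λ` is Artinian. Its base change `φ : Λ ⊗ R → R` is a
retraction of `r ↦ 1 ⊗ r`, and `z - 1 ⊗ φ z` is nilpotent for every `z`. If `z` is idempotent then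
`φ z` is idempotent, so `z` and `1 ⊗ φ z` are idempotents of a commutative ring with nilpotent
difference, and hence equal.
-/

universe u

open scoped TensorProduct

theorem idempotents_of_tensor_local
    (k : Type u) [Field k]
    (Λ : Type u) [CommRing Λ] [Algebra k Λ] [FiniteDimensional k Λ] [IsLocalRing Λ]
    (hres : Function.Bijective (algebraMap k (IsLocalRing.ResidueField Λ)))
    (R : Type u) [CommRing R] [Algebra k R]
    (z : Λ ⊗[k] R) (hz : z * z = z) :
    ∃ e : R, e * e = e ∧ z = (1 : Λ) ⊗ₜ[k] e := by
  have : IsArtinianRing Λ := IsArtinianRing.of_finite k Λ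
  let ψ : k ≃ₐ[k] IsLocalRing.ResidueField Λ :=
    AlgEquiv.ofBijective (Algebra.ofId k (IsLocalRing.ResidueField Λ)) hres
  let π : Λ →ₐ[k] k :=
    ψ.symm.toAlgHom.comp (IsScalarTower.toAlgHom k Λ (IsLocalRing.ResidueField Λ))
  have hπ : ∀ x : Λ, π x = 0 → IsNilpotent x := by
    intro x hx
    have h0 : IsLocalRing.residue Λ x = 0 := ψ.symm.injective (hx.trans (map_zero _).symm)
    rw [IsLocalRing.residue_eq_zero_iff] at h0
    obtain ⟨n, hn⟩ := (isArtinianRing_iff_isNilpotent_maximalIdeal Λ).mp ‹_›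
    exact ⟨n, by simpa [hn] using Ideal.pow_mem_pow h0 n⟩
  let φ : Λ ⊗[k] R →ₐ[k] R :=
    (Algebra.TensorProduct.lid k R).toAlgHom.comp
      (Algebra.TensorProduct.map π (AlgHom.id k R))
  have hφ : ∀ (a : Λ) (r : R), φ (a ⊗ₜ r) = π a • r := fun a r => by simp [φ]
  have key : ∀ w : Λ ⊗[k] R, IsNilpotent (w - (1 : Λ) ⊗ₜ[k] φ w) := by
    intro w
    induction w using TensorProduct.induction_on with
    | zero => simp
    | tmul a r =>
      have h1 : a ⊗ₜ[k] r - (1 : Λ) ⊗ₜ[k] φ (a ⊗ₜ[k] r) =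
          (a - algebraMap k Λ (π a)) ⊗ₜ[k] r := by
        rw [hφ, TensorProduct.sub_tmul, Algebra.algebraMap_eq_smul_one,
          TensorProduct.smul_tmul]
      rw [h1]
      obtain ⟨n, hn⟩ := hπ (a - algebraMap k Λ (π a)) (by simp)
      exact ⟨n, by rw [Algebra.TensorProduct.tmul_pow, hn, TensorProduct.zero_tmul]⟩
    | add x y hx hy =>
      rw [map_add, TensorProduct.tmul_add, add_sub_add_comm]
      exact (Commute.all _ _).isNilpotent_add hx hy
  have he : φ z * φ z = φ z := by rw [← map_mul, hz]
  refine ⟨φ z, he, ?_⟩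
  refine eq_of_isNilpotent_sub_of_isIdempotentElem hz ?_ (key z)
  rw [IsIdempotentElem, Algebra.TensorProduct.tmul_mul_tmul, one_mul, he]
end

section
/- (Pickert) Let L/S be a purely inseparable field extension of finite degree in characteristic p > 0. For any generating set Λ of L over S, there exists a normal generating sequence x₁, …, x_r of L/S with each xᵢ ∈ Λ. -/
/-!
The exponents over `S` of the elements of `L` are bounded because `L/S` is finite, so over any
intermediate field `K` some `a ∈ Λ` has maximal exponent `m` *among elements of `Λ`*. The elements
`y` with `y ^ p ^ m ∈ K` form a subfield (Frobenius is a ring homomorphism) containing `K` and `Λ`,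
hence equal to `L`; so `a` is in fact normal in `L/K`
(`exists_isNormalElem_of_adjoin_eq_top`). If `K ≠ L`, then `Λ ⊄ K`, so `m > 0` and `a ∉ K`.
Thus a sequence in `Λ` that does not yet generate `L` can always be prolonged, and this
stops since the subfields generated increase strictly in a finite extension.
-/

/-!
STATEMENT 4 (Pickert): Let L/S be a purely inseparable field extension of finite
degree in characteristic p > 0. For any generating set Λ of L over S there exists
a normal generating sequence x₁, …, x_r of L/S with each xᵢ ∈ Λ.
-/

universe u

/-- The exponent of `x` over `S`: the least `e` with `x ^ p ^ e ∈ S`. -/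
noncomputable def pexp (S L : Type u) [Field S] [Field L] [Algebra S L] (p : ℕ) (x : L) : ℕ :=
  sInf { e : ℕ | x ^ p ^ e ∈ (algebraMap S L).range }

/-- `x` is normal in `L/S` if its exponent over `S` is maximal among elements of `L`. -/
def IsNormalElem (S L : Type u) [Field S] [Field L] [Algebra S L] (p : ℕ) (x : L) : Prop :=
  ∀ y : L, pexp S L p y ≤ pexp S L p x

/-- `L_{i-1} = S(x_1, …, x_{i-1})`, the subfield generated over `S` by the
terms of the sequence preceding `x i`. -/
noncomputable def prevField (S L : Type u) [Field S] [Field L] [Algebra S L] {r : ℕ}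
    (x : Fin r → L) (i : Fin r) : IntermediateField S L :=
  IntermediateField.adjoin S (x '' {j | j < i})

/-- `x₁, …, x_r` is a normal generating sequence of `L/S` of type `e = (e₁, …, e_r)`:
each `xᵢ` is normal in `L/L_{i-1}` with exponent `eᵢ` over `L_{i-1}`, `xᵢ ∉ L_{i-1}`,
and `L_r = L`. -/
def IsNormalGenSeqOfType (S L : Type u) [Field S] [Field L] [Algebra S L] (p : ℕ) {r : ℕ}
    (x : Fin r → L) (e : Fin r → ℕ) : Prop :=
  (∀ i : Fin r,
      x i ∉ prevField S L x i ∧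
      IsNormalElem (↥(prevField S L x i)) L p (x i) ∧
      pexp (↥(prevField S L x i)) L p (x i) = e i) ∧
  IntermediateField.adjoin S (Set.range x) = ⊤

section PurelyInseparable

variable {S L : Type u} [Field S] [Field L] [Algebra S L]

theorem mem_range_algebraMap_intermediateField_iff (K : IntermediateField S L) (y : L) :
    y ∈ (algebraMap K L).range ↔ y ∈ K :=
  ⟨fun ⟨z, hz⟩ => hz ▸ z.2, fun h => ⟨⟨y, h⟩, rfl⟩⟩

theorem pexp_intermediateField_le (p : ℕ) (K : IntermediateField S L) {n : ℕ} {y : L}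
    (h : y ^ p ^ n ∈ K) : pexp K L p y ≤ n :=
  Nat.sInf_le ((mem_range_algebraMap_intermediateField_iff K _).2 h)

/-- The elements of `L` whose `p ^ n`-th power lies in `K`. -/
def powMemField (p : ℕ) [ExpChar L p] (n : ℕ) (K : IntermediateField S L) :
    IntermediateField S L :=
  (K.toSubfield.comap (iterateFrobenius L p n)).toIntermediateField fun s => by
    simpa [Subfield.mem_comap, iterateFrobenius_def] using
      pow_mem (K.algebraMap_mem s) (p ^ n)

theorem mem_powMemField (p : ℕ) [ExpChar L p] (n : ℕ) (K : IntermediateField S L) (y : L) :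
    y ∈ powMemField p n K ↔ y ^ p ^ n ∈ K := by
  rw [← iterateFrobenius_def]
  exact Iff.rfl

theorem exists_forall_pow_mem (p : ℕ) (hp : p.Prime) [CharP L p]
    [FiniteDimensional S L] [IsPurelyInseparable S L] :
    ∃ n : ℕ, ∀ (K : IntermediateField S L) (y : L), y ^ p ^ n ∈ K := by
  have : CharP S p := (RingHom.charP_iff (algebraMap S L) (algebraMap S L).injective p).2 ‹_›
  have : ExpChar S p := .prime hp
  obtain ⟨n, hn⟩ := IsPurelyInseparable.HasExponent.has_exponent (K := S) (L := L)
  refine ⟨n, fun K y => ?_⟩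
  obtain ⟨s, hs⟩ := hn y
  rw [← ringExpChar.eq S p, ← hs]
  exact K.algebraMap_mem s

/-- Over a proper intermediate field, an element of `Λ` of maximal exponent among those of `Λ`
is normal in `L`. -/
theorem exists_isNormalElem_of_adjoin_eq_top (p : ℕ) (hp : p.Prime) [CharP L p]
    [FiniteDimensional S L] [IsPurelyInseparable S L]
    {Λ : Set L} (hΛ : IntermediateField.adjoin S Λ = ⊤)
    (K : IntermediateField S L) (hK : K ≠ ⊤) :
    ∃ a ∈ Λ, a ∉ K ∧ IsNormalElem K L p a := by
  have : ExpChar L p := .prime hp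
  obtain ⟨N, hN⟩ := exists_forall_pow_mem (S := S) (L := L) p hp
  have hpow (y : L) : y ^ p ^ pexp K L p y ∈ K :=
    (mem_range_algebraMap_intermediateField_iff K _).1 <|
      Nat.sInf_mem (s := {e : ℕ | y ^ p ^ e ∈ (algebraMap K L).range})
        ⟨N, (mem_range_algebraMap_intermediateField_iff K _).2 (hN K y)⟩
  have htop (F : IntermediateField S L) (hF : Λ ⊆ F) : F = ⊤ :=
    top_le_iff.1 (hΛ ▸ IntermediateField.adjoin_le_iff.2 hF)
  obtain ⟨b, hb, hbK⟩ := Set.not_subset.1 (mt (htop K) hK)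
  obtain ⟨a, ha, hmax⟩ : ∃ a ∈ Λ, ∀ c ∈ Λ, pexp K L p c ≤ pexp K L p a := by
    have hfin : (pexp K L p '' Λ).Finite :=
      (Set.finite_Iic N).subset <| by
        rintro _ ⟨c, -, rfl⟩
        exact pexp_intermediateField_le p K (hN K c)
    obtain ⟨_, ⟨a, ha, rfl⟩, h⟩ := Set.exists_max_image _ id hfin ⟨_, b, hb, rfl⟩
    exact ⟨a, ha, fun c hc => h _ ⟨c, hc, rfl⟩⟩
  refine ⟨a, ha, fun haK => hbK ?_, fun y => ?_⟩
  · have h0 : pexp K L p a = 0 :=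
      Nat.le_zero.1 (pexp_intermediateField_le p K (by simpa using haK))
    have hb0 : pexp K L p b = 0 := Nat.le_zero.1 (h0 ▸ hmax b hb)
    simpa [hb0] using hpow b
  · have h : powMemField p (pexp K L p a) K = ⊤ := htop _ fun c hc => by
      refine (mem_powMemField ..).2 ?_
      obtain ⟨d, hd⟩ := Nat.exists_eq_add_of_le (hmax c hc)
      rw [hd, pow_add, pow_mul]
      exact pow_mem (hpow c) _
    exact pexp_intermediateField_le p K
      ((mem_powMemField ..).1 (h ▸ IntermediateField.mem_top))

theorem prevField_snoc_castSucc {r : ℕ} (x : Fin r → L) (a : L) (i : Fin r) :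
    prevField S L (Fin.snoc x a : Fin (r + 1) → L) i.castSucc = prevField S L x i := by
  unfold prevField
  congr 1
  ext y
  constructor
  · rintro ⟨j, hj, rfl⟩
    induction j using Fin.lastCases with
    | last => exact absurd hj (not_lt.2 (Fin.le_last _))
    | cast j => exact ⟨j, hj, by simp⟩
  · rintro ⟨j, hj, rfl⟩
    exact ⟨j.castSucc, hj, by simp⟩

theorem prevField_snoc_last {r : ℕ} (x : Fin r → L) (a : L) :
    prevField S L (Fin.snoc x a : Fin (r + 1) → L) (Fin.last r) =
      IntermediateField.adjoin S (Set.range x) := by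
  unfold prevField
  congr 1
  ext y
  constructor
  · rintro ⟨j, hj, rfl⟩
    induction j using Fin.lastCases with
    | last => exact (lt_irrefl (Fin.last r) hj).elim
    | cast j => exact ⟨j, by simp⟩
  · rintro ⟨j, rfl⟩
    exact ⟨j.castSucc, Fin.castSucc_lt_last j, by simp⟩

/-- Any sequence in `Λ` whose terms are normal over their predecessors prolongs to one that
generates `L`. -/
theorem exists_adjoin_range_eq_top_of_normal_seq (p : ℕ) (hp : p.Prime) [CharP L p]
    [FiniteDimensional S L] [IsPurelyInseparable S L]
    {Λ : Set L} (hΛ : IntermediateField.adjoin S Λ = ⊤)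
    (K : IntermediateField S L) (r : ℕ) (x : Fin r → L)
    (hxK : IntermediateField.adjoin S (Set.range x) = K)
    (hxΛ : ∀ i, x i ∈ Λ)
    (hx : ∀ i, x i ∉ prevField S L x i ∧ IsNormalElem (prevField S L x i) L p (x i)) :
    ∃ (r : ℕ) (x : Fin r → L), (∀ i, x i ∈ Λ) ∧
      (∀ i, x i ∉ prevField S L x i ∧ IsNormalElem (prevField S L x i) L p (x i)) ∧
      IntermediateField.adjoin S (Set.range x) = ⊤ := by
  have : WellFoundedGT (IntermediateField S L) :=
    StrictMono.wellFoundedGT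
      (f := fun K : IntermediateField S L => Subalgebra.toSubmodule K.toSubalgebra)
      fun _ _ h => h
  induction K using WellFoundedGT.induction generalizing r with
  | ind K ih =>
    by_cases hK : K = ⊤
    · exact ⟨r, x, hxΛ, hx, hxK.trans hK⟩
    obtain ⟨a, ha, haK, hnorm⟩ := exists_isNormalElem_of_adjoin_eq_top p hp hΛ K hK
    refine ih _ ?_ (r + 1) (Fin.snoc x a : Fin (r + 1) → L) rfl (fun i => ?_) (fun i => ?_)
    · have hmem : a ∈ IntermediateField.adjoin S
          (Set.range (Fin.snoc x a : Fin (r + 1) → L)) :=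
        IntermediateField.subset_adjoin S _ ⟨Fin.last r, by simp⟩
      refine lt_of_le_of_ne ?_ fun h => haK (h ▸ hmem)
      rw [← hxK]
      refine IntermediateField.adjoin.mono S _ _ ?_
      rintro _ ⟨j, rfl⟩
      exact ⟨j.castSucc, by simp⟩
    · induction i using Fin.lastCases with
      | last => simpa using ha
      | cast i => simpa using hxΛ i
    · induction i using Fin.lastCases with
      | last =>
        rw [prevField_snoc_last, hxK, Fin.snoc_last]
        exact ⟨haK, hnorm⟩
      | cast i =>
        rw [prevField_snoc_castSucc, Fin.snoc_castSucc]
        exact hx i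

end PurelyInseparable

theorem exists_normal_generating_sequence_in_generating_set
    (p : ℕ) (hp : p.Prime)
    (S L : Type u) [Field S] [Field L] [Algebra S L] [CharP L p]
    [FiniteDimensional S L] [IsPurelyInseparable S L]
    (Λ : Set L) (hΛ : IntermediateField.adjoin S Λ = ⊤) :
    ∃ (r : ℕ) (x : Fin r → L) (e : Fin r → ℕ),
      (∀ i : Fin r, x i ∈ Λ) ∧ IsNormalGenSeqOfType S L p x e := by
  obtain ⟨r, x, hxΛ, hx, htop⟩ := exists_adjoin_range_eq_top_of_normal_seq p hp hΛ _ 0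
    Fin.elim0 rfl (fun i => i.elim0) (fun i => i.elim0)
  exact ⟨r, x, _, hxΛ, fun i => ⟨(hx i).1, (hx i).2, rfl⟩, htop⟩
end

section
/- (Pickert) Let L/S be a purely inseparable field extension of finite degree in characteristic p > 0. If x₁, …, x_r and y₁, …, y_s are two normal generating sequences of L/S, of types (e₁, …, e_r) and (f₁, …, f_s) respectively, then r = s and eᵢ = fᵢ for each i = 1, …, r. -/
/-!
For a normal generating sequence `x₁, …, x_r` of type `(e₁, …, e_r)` put `Lᵢ = S(x₁, …, xᵢ)` and,
for fixed `n`, `Kᵢ = Lᵢ(L^{p^n})`. The tower `K₀ ⊆ K₁ ⊆ … ⊆ K_r = L` starts at `K₀ = S(L^{p^n})`,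
which does not depend on the sequence, and `Kᵢ = Kᵢ₋₁(xᵢ)`. The key point is that
`[Kᵢ : Kᵢ₋₁] = p ^ min(n, eᵢ)`, equivalently that `xᵢ` has exponent `k = min(n, eᵢ)` over `Kᵢ₋₁`:

* `xᵢ^{p^n} ∈ L^{p^n}` and `xᵢ^{p^eᵢ} ∈ Lᵢ₋₁`, so the exponent is at most `k`;
* if `xᵢ^{p^(k-1)} ∈ Lᵢ₋₁(L^{p^n})` with `k ≥ 1`, raising to the power `p^(eᵢ-k)` gives
  `xᵢ^{p^(eᵢ-1)} ∈ Lᵢ₋₁(L^{p^(n+eᵢ-k)})`. As `n + eᵢ - k ≥ eᵢ` and `xᵢ` is normal over `Lᵢ₋₁`,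
  this field is `Lᵢ₋₁`, contradicting the minimality of `eᵢ`.

Hence `[L : S(L^{p^n})] = p ^ ∑ min(n, eᵢ)`, so `∑ min(n, eᵢ)` is an invariant of `L/S` for every
`n`, and so is its increment `#{i | n < eᵢ}`. Since the `eᵢ` are positive and nonincreasing, these
numbers determine the type (`n = 0` gives the length `r`).
-/

/-!
STATEMENT 5 (Pickert): Let L/S be a purely inseparable field extension of finite
degree in characteristic p > 0. If x₁, …, x_r and y₁, …, y_s are two normal
generating sequences of L/S, of types (e₁, …, e_r) and (f₁, …, f_s) respectively,
then r = s and eᵢ = fᵢ for each i.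
-/

universe u

open IntermediateField

section Field

variable {S L : Type u} [Field S] [Field L] [Algebra S L] {p : ℕ}

theorem exists_pow_mem (hp : p.Prime) [CharP L p] [IsPurelyInseparable S L]
    (K : IntermediateField S L) (y : L) : ∃ n, y ^ p ^ n ∈ K := by
  have : ExpChar L p := ExpChar.prime hp
  have : ExpChar S p := (algebraMap S L).expChar (algebraMap S L).injective p
  obtain ⟨n, z, hz⟩ := IsPurelyInseparable.pow_mem S p y
  exact ⟨n, hz ▸ K.algebraMap_mem z⟩

theorem pexp_le_iff (hp : p.Prime) [CharP L p] [IsPurelyInseparable S L]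
    (K : IntermediateField S L) (y : L) (n : ℕ) : pexp K L p y ≤ n ↔ y ^ p ^ n ∈ K := by
  have key : ∀ m, y ^ p ^ m ∈ (algebraMap K L).range ↔ y ^ p ^ m ∈ K := fun m =>
    ⟨by rintro ⟨z, hz⟩; exact hz ▸ z.2, fun h => ⟨⟨_, h⟩, rfl⟩⟩
  constructor
  · intro h
    obtain ⟨m, hm⟩ := exists_pow_mem hp K y
    have hmem : y ^ p ^ pexp K L p y ∈ K :=
      (key _).1 (Nat.sInf_mem (s := {e | y ^ p ^ e ∈ (algebraMap K L).range}) ⟨m, (key m).2 hm⟩)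
    obtain ⟨d, rfl⟩ := Nat.exists_eq_add_of_le h
    rw [pow_add, pow_mul]
    exact pow_mem hmem _
  · exact fun h => Nat.sInf_le ((key n).2 h)

/-- A simple purely inseparable extension has degree `p ^ k`, where `k` is the exponent of its
generator. -/
theorem finrank_adjoin_simple_eq (hp : p.Prime) [CharP L p] [FiniteDimensional S L]
    [IsPurelyInseparable S L] (K : IntermediateField S L) (y : L) (k : ℕ)
    (h1 : y ^ p ^ k ∈ K) (h2 : k ≠ 0 → y ^ p ^ (k - 1) ∉ K) :
    Module.finrank S (K⟮y⟯.restrictScalars S) = Module.finrank S K * p ^ k := by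
  have : ExpChar L p := ExpChar.prime hp
  have : ExpChar K p := (algebraMap K L).expChar (algebraMap K L).injective p
  have hk : IsPurelyInseparable.elemExponent K y = k := by
    apply le_antisymm
    · exact IsPurelyInseparable.elemExponent_le_of_pow_mem' p ⟨⟨_, h1⟩, rfl⟩
    · by_contra! hlt
      refine h2 (by omega) ?_
      obtain ⟨z, hz⟩ := IsPurelyInseparable.elemExponent_def' K p y
      obtain ⟨d, hd⟩ := Nat.exists_eq_add_of_le (Nat.le_sub_one_of_lt hlt)
      rw [hd, pow_add, pow_mul, ← hz]
      exact pow_mem z.2 _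
  have hf : Module.finrank K K⟮y⟯ = p ^ k := by
    rw [adjoin.finrank (.of_finite K y), IsPurelyInseparable.minpoly_natDegree_eq' K p, hk]
  rw [← hf]
  exact (Module.finrank_mul_finrank S K K⟮y⟯).symm

/-- Raising to the power `p ^ t` maps `S(A, L^{p^n})` into `S(A, L^{p^(n+t)})`. -/
theorem pow_mem_adjoin_union (hp : p.Prime) [CharP L p] (A : Set L) (n t : ℕ) (a : L)
    (ha : a ∈ adjoin S (A ∪ Set.range fun y : L => y ^ p ^ n)) :
    a ^ p ^ t ∈ adjoin S (A ∪ Set.range fun y : L => y ^ p ^ (n + t)) := by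
  have : Fact p.Prime := ⟨hp⟩
  induction ha using adjoin_induction with
  | mem x hx =>
    rcases hx with hx | ⟨y, rfl⟩
    · exact pow_mem (subset_adjoin S _ (Set.mem_union_left _ hx)) _
    · refine subset_adjoin _ _ (Or.inr ⟨y, ?_⟩)
      simp only [← pow_mul, pow_add]
  | algebraMap x => exact pow_mem (IntermediateField.algebraMap_mem _ _) _
  | add x y _ _ hx hy => rw [add_pow_char_pow]; exact add_mem hx hy
  | inv x _ hx => rw [inv_pow]; exact inv_mem hx
  | mul x y _ _ hx hy => rw [mul_pow]; exact mul_mem hx hy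

/-- The field `L_m(L^{p^n})`, where `L_m` is generated over `S` by the first `m` terms of `x`. -/
noncomputable def stage (S : Type u) {L : Type u} [Field S] [Field L] [Algebra S L] (p : ℕ) {r : ℕ}
    (x : Fin r → L) (n m : ℕ) : IntermediateField S L :=
  adjoin S (x '' {j | (j : ℕ) < m} ∪ Set.range fun y : L => y ^ p ^ n)

theorem stage_succ {r : ℕ} (x : Fin r → L) (n : ℕ) (i : Fin r) :
    stage S p x n (i + 1) = ((stage S p x n i)⟮x i⟯).restrictScalars S := by
  rw [stage, stage, adjoin_adjoin_left]
  congr 1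
  have : {j : Fin r | (j : ℕ) < i + 1} = {j : Fin r | (j : ℕ) < i} ∪ {i} := by
    ext j
    simp only [Set.mem_ofPred_eq, Set.mem_union, Set.mem_singleton_iff, Fin.ext_iff]
    omega
  rw [this, Set.image_union, Set.image_singleton, Set.union_right_comm]

theorem stage_self {r : ℕ} {x : Fin r → L} (h : adjoin S (Set.range x) = ⊤) (n : ℕ) :
    stage S p x n r = ⊤ := by
  rw [eq_top_iff, ← h]
  refine adjoin.mono _ _ _ ?_
  rintro _ ⟨j, rfl⟩
  exact Or.inl ⟨j, j.2, rfl⟩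

variable [CharP L p] [IsPurelyInseparable S L] {r : ℕ} {x : Fin r → L} {e : Fin r → ℕ}

theorem IsNormalGenSeqOfType.pow_mem_prevField (hp : p.Prime)
    (hx : IsNormalGenSeqOfType S L p x e) (i : Fin r) (y : L) :
    y ^ p ^ e i ∈ prevField S L x i := by
  rw [← pexp_le_iff hp, ← (hx.1 i).2.2]
  exact (hx.1 i).2.1 y

theorem IsNormalGenSeqOfType.pos (hp : p.Prime)
    (hx : IsNormalGenSeqOfType S L p x e) (i : Fin r) : 0 < e i := by
  rw [← (hx.1 i).2.2]
  by_contra! h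
  rw [pexp_le_iff hp, pow_zero, pow_one] at h
  exact (hx.1 i).1 h

theorem IsNormalGenSeqOfType.antitone (hp : p.Prime)
    (hx : IsNormalGenSeqOfType S L p x e) : Antitone e := by
  intro i j hij
  rw [← (hx.1 j).2.2, pexp_le_iff hp]
  refine adjoin.mono S _ _ ?_ (hx.pow_mem_prevField hp i (x j))
  exact Set.image_mono fun k (hk : k < i) => hk.trans_le hij

/-- The degree of each step of the tower `L_m(L^{p^n})`: over `Lᵢ₋₁(L^{p^n})` the element `xᵢ` has
exponent exactly `min(n, eᵢ)`. -/
theorem IsNormalGenSeqOfType.finrank_stage_succ [FiniteDimensional S L] (hp : p.Prime)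
    (hx : IsNormalGenSeqOfType S L p x e) (n : ℕ) (i : Fin r) :
    Module.finrank S (stage S p x n (i + 1)) =
      Module.finrank S (stage S p x n i) * p ^ min n (e i) := by
  rw [stage_succ]
  apply finrank_adjoin_simple_eq hp
  · rcases min_choice n (e i) with h | h <;> rw [h]
    · exact subset_adjoin _ _ (Or.inr ⟨x i, rfl⟩)
    · exact adjoin.mono S _ _ Set.subset_union_left (hx.pow_mem_prevField hp i (x i))
  · intro h0 hmem
    have h1 := pow_mem_adjoin_union hp _ n (e i - min n (e i)) _ hmem
    rw [← pow_mul, ← pow_add] at h1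
    have h2 : x i ^ p ^ (e i - 1) ∈ prevField S L x i := by
      have h3 : min n (e i) - 1 + (e i - min n (e i)) = e i - 1 := by omega
      rw [h3] at h1
      refine adjoin_le_iff.2 ?_ h1
      rintro _ (hy | ⟨y, rfl⟩)
      · exact subset_adjoin _ _ hy
      · obtain ⟨d, hd⟩ := Nat.exists_eq_add_of_le
          (show e i ≤ n + (e i - min n (e i)) by omega)
        simp only [hd, pow_add, pow_mul]
        exact pow_mem (hx.pow_mem_prevField hp i y) _
    rw [← pexp_le_iff hp, (hx.1 i).2.2] at h2
    have := hx.pos hp i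
    omega

/-- The degree formula `[L : S] = [S(L^{p^n}) : S] * p ^ ∑ min(n, eᵢ)`. -/
theorem IsNormalGenSeqOfType.finrank_eq [FiniteDimensional S L] (hp : p.Prime)
    (hx : IsNormalGenSeqOfType S L p x e) (n : ℕ) :
    Module.finrank S L =
      Module.finrank S (adjoin S (Set.range fun y : L => y ^ p ^ n)) *
        p ^ ∑ i, min n (e i) := by
  have key : ∀ m ≤ r, Module.finrank S (stage S p x n m) =
      Module.finrank S (adjoin S (Set.range fun y : L => y ^ p ^ n)) *
        p ^ ∑ i with (i : Fin r).val < m, min n (e i) := by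
    intro m
    induction m with
    | zero =>
      intro _
      have h0 : stage S p x n 0 = adjoin S (Set.range fun y : L => y ^ p ^ n) := by simp [stage]
      rw [h0]; simp
    | succ m ih =>
      intro hm
      have hs : (Finset.univ.filter fun i : Fin r => i.val < m + 1) =
          insert ⟨m, hm⟩ (Finset.univ.filter fun i : Fin r => i.val < m) := by
        ext j
        simp only [Finset.mem_filter, Finset.mem_univ, true_and, Finset.mem_insert, Fin.ext_iff]
        omega
      rw [hx.finrank_stage_succ hp n ⟨m, hm⟩, ih (by omega), hs, Finset.sum_insert (by simp),
        mul_assoc, ← pow_add, add_comm]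
  have h := key r le_rfl
  rw [stage_self hx.2, finrank_top'] at h
  simpa using h

end Field

/-- The number of entries exceeding `n` is the increment at `n` of `n ↦ ∑ min(n, eᵢ)`. -/
theorem card_lt_add_sum_min {r : ℕ} (e : Fin r → ℕ) (n : ℕ) :
    (Finset.univ.filter fun i => n < e i).card + ∑ i, min n (e i) = ∑ i, min (n + 1) (e i) := by
  rw [Finset.card_filter, ← Finset.sum_add_distrib]
  refine Finset.sum_congr rfl fun i _ => ?_
  split_ifs <;> omega

theorem Antitone.lt_iff_lt_card {r : ℕ} {e : Fin r → ℕ} (he : Antitone e) (n : ℕ) (i : Fin r) :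
    n < e i ↔ (i : ℕ) < (Finset.univ.filter fun j => n < e j).card := by
  constructor
  · intro h
    have hsub : Finset.Iic i ⊆ Finset.univ.filter fun j => n < e j := fun j hj => by
      simpa using h.trans_le (he (Finset.mem_Iic.1 hj))
    have := Finset.card_le_card hsub
    rw [Fin.card_Iic] at this
    omega
  · intro h
    by_contra! hn
    have hsub : (Finset.univ.filter fun j => n < e j) ⊆ Finset.Iio i := fun j hj => by
      by_contra hj'
      simp only [Finset.mem_Iio, not_lt] at hj'
      have := he hj'
      have := (Finset.mem_filter.1 hj).2
      omega
    have := Finset.card_le_card hsub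
    rw [Fin.card_Iio] at this
    omega

theorem type_of_normal_generating_sequence_unique
    (p : ℕ) (hp : p.Prime)
    (S L : Type u) [Field S] [Field L] [Algebra S L] [CharP L p]
    [FiniteDimensional S L] [IsPurelyInseparable S L]
    {r s : ℕ} (x : Fin r → L) (e : Fin r → ℕ) (y : Fin s → L) (f : Fin s → ℕ)
    (hx : IsNormalGenSeqOfType S L p x e)
    (hy : IsNormalGenSeqOfType S L p y f) :
    r = s ∧ ∀ (i : Fin r) (j : Fin s), (i : ℕ) = (j : ℕ) → e i = f j := by
  have hsum : ∀ n, ∑ i, min n (e i) = ∑ j, min n (f j) := by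
    intro n
    have h := (hx.finrank_eq hp n).symm.trans (hy.finrank_eq hp n)
    exact Nat.pow_right_injective hp.two_le (Nat.eq_of_mul_eq_mul_left Module.finrank_pos h)
  have hcard : ∀ n, (Finset.univ.filter fun i => n < e i).card =
      (Finset.univ.filter fun j => n < f j).card := by
    intro n
    have h1 := card_lt_add_sum_min e n
    have h2 := card_lt_add_sum_min f n
    have h3 := hsum n
    have h4 := hsum (n + 1)
    omega
  constructor
  · simpa [hx.pos hp, hy.pos hp] using hcard 0
  · intro i j hij
    refine eq_of_forall_lt_iff fun n => ?_
    rw [(hx.antitone hp).lt_iff_lt_card, (hy.antitone hp).lt_iff_lt_card, hcard, hij]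
end

section
/- Let k be a field of characteristic p > 0. For integers n, m ≥ 1 and tuples e = (e₁, …, e_r) with e₁ ≥ ⋯ ≥ e_r ≥ 1 and f = (f₁, …, f_s) with f₁ ≥ ⋯ ≥ f_s ≥ 1, the k-algebras Λ_{n,e} and Λ_{m,f} are isomorphic if and only if m = n and e = f (i.e., r = s and eᵢ = fᵢ for all i). -/
/-!
Set `Λ = Λ_{n,e}`. For every `t`, the elements `a ∈ Λ` with `a ^ p ^ t = 0` are exactly the kernel of
the projection `Λ_{n,e} → Λ_{n,e-t}`, where `e - t` is the tuple of truncated differences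
`max (eᵢ - t) 0` (`pow_mem_truncIdeal_iff`). This kernel is preserved by ring isomorphisms, so an
isomorphism `Λ_{n,e} ≅ Λ_{m,f}` yields `dim Λ_{n,e-t} = dim Λ_{m,f-t}`, that is
`n * p ^ ∑ (eᵢ - t) = m * p ^ ∑ (fⱼ - t)` for all `t` (`dim_eq_of_algEquiv`).

Taking `t` large gives `n = m`, hence `∑ (eᵢ - t) = ∑ (fⱼ - t)` for every `t`. Differencing in `t`
gives `#{i | eᵢ > t} = #{j | fⱼ > t}`. At `t = 0` this is `r = s`, and a non-increasing tuple is
determined by these counts (`lt_card_filter_iff`).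

Both the dimension and the kernel are computed from the fact that `truncIdeal` is a monomial ideal.
-/

/-!
STATEMENT 8: For n, m ≥ 1 and tuples e = (e₁,…,e_r), f = (f₁,…,f_s) with
e₁ ≥ ⋯ ≥ e_r ≥ 1 and f₁ ≥ ⋯ ≥ f_s ≥ 1, the k-algebras Λ_{n,e} and Λ_{m,f}
are isomorphic if and only if m = n and e = f.
-/

universe u

/-- The defining ideal `(x₁^{p^{e₁}}, …, x_r^{p^{e_r}})` of the truncated
polynomial algebra. -/
noncomputable def truncIdeal (k : Type u) [Field k] (p : ℕ) {r : ℕ} (e : Fin r → ℕ) :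
    Ideal (MvPolynomial (Fin r) k) :=
  Ideal.span (Set.range fun i : Fin r => (MvPolynomial.X i : MvPolynomial (Fin r) k) ^ p ^ e i)

/-- The truncated polynomial algebra `Λ_e = k[x₁,…,x_r]/(x₁^{p^{e₁}}, …, x_r^{p^{e_r}})`. -/
abbrev TruncPolyAlg (k : Type u) [Field k] (p : ℕ) {r : ℕ} (e : Fin r → ℕ) : Type u :=
  MvPolynomial (Fin r) k ⧸ truncIdeal k p e

/-- `Λ_{n,e} = Λ_e × ⋯ × Λ_e` (`n` factors). -/
abbrev LambdaAlg (k : Type u) [Field k] (p n : ℕ) {r : ℕ} (e : Fin r → ℕ) : Type u :=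
  Fin n → TruncPolyAlg k p e

/-- Membership in the monomial ideal `(xᵢ^{p^{eᵢ}})` is tested on exponents. -/
lemma mem_truncIdeal_iff {k : Type u} [Field k] {p r : ℕ} (e : Fin r → ℕ)
    (q : MvPolynomial (Fin r) k) :
    q ∈ truncIdeal k p e ↔ ∀ a ∈ q.support, ∃ i, p ^ e i ≤ a i := by
  have h : truncIdeal k p e = Ideal.span ((fun s => MvPolynomial.monomial s (1 : k)) ''
      Set.range fun i : Fin r => Finsupp.single i (p ^ e i)) := by
    rw [truncIdeal, ← Set.range_comp]
    congr 2
    funext i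
    exact MvPolynomial.X_pow_eq_monomial
  rw [h, MvPolynomial.mem_ideal_span_monomial_image]
  simp

/-- The linear map recording the coefficients of the monomials `x^a` with `aᵢ < p^{eᵢ}` for all
`i`; these monomials form a basis of `Λ_e`. -/
noncomputable def truncCoeff (k : Type u) [Field k] (p : ℕ) {r : ℕ} (e : Fin r → ℕ) :
    MvPolynomial (Fin r) k →ₗ[k] (((i : Fin r) → Fin (p ^ e i)) → k) :=
  LinearMap.pi fun a => MvPolynomial.lcoeff k (Finsupp.equivFunOnFinite.symm fun i => (a i : ℕ))

lemma truncCoeff_apply {k : Type u} [Field k] {p r : ℕ} (e : Fin r → ℕ)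
    (q : MvPolynomial (Fin r) k) (a : (i : Fin r) → Fin (p ^ e i)) :
    truncCoeff k p e q a = q.coeff (Finsupp.equivFunOnFinite.symm fun i => (a i : ℕ)) := rfl

lemma truncCoeff_surjective (k : Type u) [Field k] (p : ℕ) {r : ℕ} (e : Fin r → ℕ) :
    Function.Surjective (truncCoeff k p e) := by
  classical
  intro g
  refine ⟨∑ a, MvPolynomial.monomial (Finsupp.equivFunOnFinite.symm fun i => (a i : ℕ)) (g a), ?_⟩
  funext b
  rw [truncCoeff_apply, MvPolynomial.coeff_sum, Finset.sum_eq_single b]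
  · simp
  · intro a _ hab
    rw [MvPolynomial.coeff_monomial, if_neg]
    intro h
    apply hab
    funext i
    exact Fin.ext (congrFun (Finsupp.equivFunOnFinite.symm.injective h) i)
  · simp

lemma ker_truncCoeff (k : Type u) [Field k] (p : ℕ) {r : ℕ} (e : Fin r → ℕ) :
    LinearMap.ker (truncCoeff k p e) = (truncIdeal k p e).restrictScalars k := by
  ext q
  rw [LinearMap.mem_ker, Submodule.restrictScalars_mem, mem_truncIdeal_iff]
  constructor
  · intro h a ha
    by_contra! hlt
    have h0 := congrFun h fun i => ⟨a i, hlt i⟩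
    rw [truncCoeff_apply] at h0
    exact (MvPolynomial.mem_support_iff.mp ha) (by simpa using h0)
  · intro h
    funext a
    rw [truncCoeff_apply]
    by_contra hne
    obtain ⟨i, hi⟩ := h _ (MvPolynomial.mem_support_iff.mpr hne)
    exact absurd (a i).isLt (not_lt.mpr hi)

/-- `Λ_e` as a space of functions on the exponents of its monomial basis. -/
noncomputable def truncEquiv (k : Type u) [Field k] (p : ℕ) {r : ℕ} (e : Fin r → ℕ) :
    TruncPolyAlg k p e ≃ₗ[k] (((i : Fin r) → Fin (p ^ e i)) → k) :=
  (Submodule.Quotient.restrictScalarsEquiv k (truncIdeal k p e)).symm ≪≫ₗ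
    Submodule.quotEquivOfEq _ _ (ker_truncCoeff k p e).symm ≪≫ₗ
    LinearMap.quotKerEquivOfSurjective _ (truncCoeff_surjective k p e)

lemma finrank_lambdaAlg (k : Type u) [Field k] (p n : ℕ) {r : ℕ} (e : Fin r → ℕ) :
    Module.finrank k (LambdaAlg k p n e) = n * p ^ ∑ i, e i := by
  rw [(LinearEquiv.piCongrRight fun _ : Fin n => truncEquiv k p e).finrank_eq]
  rw [Module.finrank_pi_fintype]
  simp [Finset.prod_pow_eq_pow_sum]

/-- Raising to the power `p^t` multiplies exponents by `p^t`, so that `q^{p^t}` vanishes in `Λ_e`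
exactly when `q` vanishes in `Λ_{e-t}`. Truncated subtraction is the right one here: for
`eᵢ ≤ t`, both `p^{eᵢ} ≤ p^t a` and `p^{eᵢ-t} ≤ a` say that `a ≠ 0`. -/
lemma pow_mem_truncIdeal_iff {k : Type u} [Field k] {p : ℕ} (hp : p.Prime) [CharP k p]
    {r : ℕ} (e : Fin r → ℕ) (t : ℕ) (q : MvPolynomial (Fin r) k) :
    q ^ p ^ t ∈ truncIdeal k p e ↔ q ∈ truncIdeal k p fun i => e i - t := by
  classical
  have : ExpChar k p := ExpChar.prime hp
  have hpt : 0 < p ^ t := pow_pos hp.pos t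
  have key (a b : ℕ) : p ^ b ≤ p ^ t * a ↔ p ^ (b - t) ≤ a := by
    rcases le_total t b with h | h
    · obtain ⟨c, rfl⟩ := Nat.exists_eq_add_of_le h
      rw [pow_add, Nat.add_sub_cancel_left]
      exact Nat.mul_le_mul_left_iff hpt
    · rw [Nat.sub_eq_zero_of_le h, pow_zero]
      constructor
      · intro h1
        rcases Nat.eq_zero_or_pos a with rfl | h2
        · have := pow_pos hp.pos b
          omega
        · exact h2
      · intro h1
        exact (Nat.pow_le_pow_right hp.pos h).trans (Nat.le_mul_of_pos_right _ h1)
  rw [mem_truncIdeal_iff, mem_truncIdeal_iff, ← MvPolynomial.map_iterateFrobenius_expand p q t,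
    MvPolynomial.support_map_of_injective _ (iterateFrobenius_inj k p t),
    MvPolynomial.support_expand q hpt.ne', Finset.forall_mem_image]
  simp [key]

/-- The projection `Λ_{n,e} → Λ_{n,e-t}`. -/
noncomputable def lambdaProj (k : Type u) [Field k] (p n : ℕ) {r : ℕ} (e : Fin r → ℕ) (t : ℕ)
    (hle : truncIdeal k p e ≤ truncIdeal k p fun i => e i - t) :
    LambdaAlg k p n e →ₗ[k] LambdaAlg k p n fun i => e i - t :=
  LinearMap.pi fun j => (Ideal.Quotient.factorₐ k hle).toLinearMap ∘ₗ LinearMap.proj j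

lemma truncIdeal_le {k : Type u} [Field k] {p : ℕ} (hp : p.Prime) {r : ℕ} (e : Fin r → ℕ) (t : ℕ) :
    truncIdeal k p e ≤ truncIdeal k p fun i => e i - t := by
  intro q hq
  rw [mem_truncIdeal_iff] at hq ⊢
  intro a ha
  obtain ⟨i, hi⟩ := hq a ha
  exact ⟨i, (Nat.pow_le_pow_right hp.pos (Nat.sub_le _ _)).trans hi⟩

lemma lambdaProj_surjective {k : Type u} [Field k] {p n r : ℕ} {e : Fin r → ℕ} {t : ℕ}
    (hle : truncIdeal k p e ≤ truncIdeal k p fun i => e i - t) :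
    Function.Surjective (lambdaProj k p n e t hle) := by
  intro g
  choose a ha using fun j => Ideal.Quotient.factor_surjective hle (g j)
  exact ⟨a, funext ha⟩

/-- The kernel of `Λ_{n,e} → Λ_{n,e-t}` is described by the ring structure alone. -/
lemma lambdaProj_eq_zero_iff {k : Type u} [Field k] {p : ℕ} (hp : p.Prime) [CharP k p]
    {n r : ℕ} {e : Fin r → ℕ} {t : ℕ}
    (hle : truncIdeal k p e ≤ truncIdeal k p fun i => e i - t) (a : LambdaAlg k p n e) :
    lambdaProj k p n e t hle a = 0 ↔ a ^ p ^ t = 0 := by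
  rw [funext_iff, funext_iff]
  refine forall_congr' fun j => ?_
  obtain ⟨q, hq⟩ := Ideal.Quotient.mk_surjective (a j)
  change Ideal.Quotient.factor hle (a j) = 0 ↔ a j ^ p ^ t = 0
  rw [← hq, Ideal.Quotient.factor_mk, ← map_pow, Ideal.Quotient.eq_zero_iff_mem,
    Ideal.Quotient.eq_zero_iff_mem, pow_mem_truncIdeal_iff hp]

/-- Isomorphic algebras have isomorphic quotients `Λ_{n,e-t}` and `Λ_{m,f-t}`; this compares their
dimensions. -/
lemma dim_eq_of_algEquiv {k : Type u} [Field k] {p : ℕ} (hp : p.Prime) [CharP k p]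
    {n m r s : ℕ} {e : Fin r → ℕ} {f : Fin s → ℕ}
    (φ : LambdaAlg k p n e ≃ₐ[k] LambdaAlg k p m f) (t : ℕ) :
    n * p ^ ∑ i, (e i - t) = m * p ^ ∑ j, (f j - t) := by
  rw [← finrank_lambdaAlg k, ← finrank_lambdaAlg k]
  set π := lambdaProj k p n e t (truncIdeal_le hp e t)
  set ρ := lambdaProj k p m f t (truncIdeal_le hp f t) ∘ₗ φ.toLinearMap
  have hπ : Function.Surjective π := lambdaProj_surjective _
  have hρ : Function.Surjective ρ := (lambdaProj_surjective (truncIdeal_le hp f t)).comp φ.surjective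
  have hker : LinearMap.ker π = LinearMap.ker ρ := by
    ext a
    rw [LinearMap.mem_ker, LinearMap.mem_ker, lambdaProj_eq_zero_iff hp]
    change _ ↔ lambdaProj k p m f t (truncIdeal_le hp f t) (φ a) = 0
    rw [lambdaProj_eq_zero_iff hp, ← map_pow, map_eq_zero_iff φ φ.injective]
  exact ((π.quotKerEquivOfSurjective hπ).symm ≪≫ₗ Submodule.quotEquivOfEq _ _ hker ≪≫ₗ
    ρ.quotKerEquivOfSurjective hρ).finrank_eq

lemma sum_sub_eq_card_add {r : ℕ} (e : Fin r → ℕ) (t : ℕ) :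
    ∑ i, (e i - t) = (Finset.univ.filter fun i => t < e i).card + ∑ i, (e i - (t + 1)) := by
  rw [Finset.card_filter, ← Finset.sum_add_distrib]
  refine Finset.sum_congr rfl fun i _ => ?_
  split_ifs <;> omega

/-- A non-increasing tuple is recovered from the counts `#{i | eᵢ > t}` (its conjugate
partition). -/
lemma lt_card_filter_iff {r : ℕ} {e : Fin r → ℕ} (he : Antitone e) (t : ℕ) (i : Fin r) :
    (i : ℕ) < (Finset.univ.filter fun i => t < e i).card ↔ t < e i := by
  constructor
  · intro h
    by_contra! hi
    have hsub : (Finset.univ.filter fun i => t < e i) ⊆ Finset.Iio i := by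
      intro j hj
      rw [Finset.mem_filter] at hj
      rw [Finset.mem_Iio]
      by_contra! hij
      have := he hij
      omega
    have := Finset.card_le_card hsub
    rw [Fin.card_Iio] at this
    omega
  · intro h
    have hsub : Finset.Iic i ⊆ Finset.univ.filter fun i => t < e i := by
      intro j hj
      rw [Finset.mem_filter]
      exact ⟨Finset.mem_univ _, h.trans_le (he (Finset.mem_Iic.mp hj))⟩
    have := Finset.card_le_card hsub
    rw [Fin.card_Iic] at this
    omega

theorem lambdaAlg_iso_iff
    (k : Type u) [Field k] (p : ℕ) (hp : p.Prime) [CharP k p]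
    (n m : ℕ) (hn : 1 ≤ n) (hm : 1 ≤ m)
    {r s : ℕ} (e : Fin r → ℕ) (f : Fin s → ℕ)
    (he : Antitone e) (he1 : ∀ i, 1 ≤ e i)
    (hf : Antitone f) (hf1 : ∀ j, 1 ≤ f j) :
    Nonempty (LambdaAlg k p n e ≃ₐ[k] LambdaAlg k p m f) ↔
      (m = n ∧ r = s ∧ ∀ (i : Fin r) (j : Fin s), (i : ℕ) = (j : ℕ) → e i = f j) := by
  constructor
  · rintro ⟨φ⟩
    have hdim := dim_eq_of_algEquiv hp φ
    have hnm : n = m := by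
      -- For `t` at least every `eᵢ` and `fⱼ`, both algebras `Λ_{e-t}`, `Λ_{f-t}` equal `k`.
      have h := hdim (∑ i, e i + ∑ j, f j)
      have h1 (i : Fin r) : e i - (∑ i, e i + ∑ j, f j) = 0 := by
        have := Finset.single_le_sum (f := e) (fun _ _ => Nat.zero_le _) (Finset.mem_univ i)
        omega
      have h2 (j : Fin s) : f j - (∑ i, e i + ∑ j, f j) = 0 := by
        have := Finset.single_le_sum (f := f) (fun _ _ => Nat.zero_le _) (Finset.mem_univ j)
        omega
      simpa [h1, h2] using h
    subst hnm
    have hsum (t : ℕ) : ∑ i, (e i - t) = ∑ j, (f j - t) :=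
      Nat.pow_right_injective hp.two_le (Nat.eq_of_mul_eq_mul_left hn (hdim t))
    have hcard (t : ℕ) : (Finset.univ.filter fun i => t < e i).card =
        (Finset.univ.filter fun j => t < f j).card := by
      have h0 := hsum t
      rw [sum_sub_eq_card_add e, sum_sub_eq_card_add f, hsum (t + 1)] at h0
      omega
    refine ⟨rfl, ?_, fun i j hij => eq_of_forall_lt_iff fun t => ?_⟩
    · have h := hcard 0
      rw [Finset.filter_true_of_mem fun i _ => Nat.lt_of_succ_le (he1 i),
        Finset.filter_true_of_mem fun j _ => Nat.lt_of_succ_le (hf1 j)] at h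
      simpa using h
    · rw [← lt_card_filter_iff he, ← lt_card_filter_iff hf, hcard, hij]
  · rintro ⟨rfl, rfl, h⟩
    obtain rfl : e = f := funext fun i => h i i rfl
    exact ⟨AlgEquiv.refl⟩
end

section
/- Let K be an infinite field of characteristic p > 0, q a power of p, S/K a separable field extension of finite degree, and a ∈ S a nonzero element. Then there exists s ∈ S such that a·s^q is a primitive element for S/K, i.e., K(a·s^q) = S. -/
/-!
For an intermediate field `L` of `S/K`, the set `{s | a * s ^ q ∈ L}` is a `K`-subspace of `S`,
because `s ↦ s ^ q` is additive and `q`-th powers of scalars lie in `K`. If this subspace is all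
of `S`, then `a ∈ L` (take `s = 1`), so `L` contains every `s ^ q`; separability gives
`K(s) = K(s ^ q)`, hence `L = S`. There are only finitely many intermediate fields, and a vector
space over an infinite field is not a finite union of proper subspaces, so some `s` lies outside
all the subspaces attached to proper `L`. For this `s`, the field `K(a * s ^ q)` cannot be proper.
-/

universe u

/-- The `K`-subspace of those `s` with `a * s ^ (p ^ m) ∈ L`. -/
def twistedPreimage {K S : Type u} [Field K] [Field S] [Algebra K S] (p m : ℕ) [ExpChar S p]
    (a : S) (L : IntermediateField K S) : Submodule K S where
  carrier := {s | a * s ^ p ^ m ∈ L}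
  add_mem' {x y} hx hy := by
    simp only [Set.mem_ofPred_eq] at *
    rw [add_pow_expChar_pow, mul_add]
    exact add_mem hx hy
  zero_mem' := by
    have h : p ^ m ≠ 0 := pow_ne_zero _ (expChar_ne_zero S p)
    simp only [Set.mem_ofPred_eq, zero_pow h, mul_zero]
    exact zero_mem L
  smul_mem' c x hx := by
    simp only [Set.mem_ofPred_eq] at *
    rw [smul_pow, mul_smul_comm]
    exact L.smul_mem hx

theorem twistedPreimage_ne_top {K S : Type u} [Field K] [Field S] [Algebra K S]
    [Algebra.IsSeparable K S] (p m : ℕ) [ExpChar K p] [ExpChar S p] {a : S} (ha : a ≠ 0)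
    {L : IntermediateField K S} (hL : L ≠ ⊤) : twistedPreimage p m a L ≠ ⊤ := by
  intro h
  have key (s : S) : a * s ^ p ^ m ∈ L := by
    have hs : s ∈ twistedPreimage p m a L := h ▸ Submodule.mem_top
    exact hs
  have haL : a ∈ L := by simpa using key 1
  refine hL (top_unique fun s _ => ?_)
  have hs : s ^ p ^ m ∈ L := by
    simpa [ha] using mul_mem (inv_mem haL) (key s)
  have hle : IntermediateField.adjoin K {s} ≤ L := by
    rw [IntermediateField.adjoin_simple_eq_adjoin_pow_expChar_pow_of_isSeparable' K S s p m]
    simpa using hs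
  exact hle (IntermediateField.mem_adjoin_simple_self K s)

theorem exists_primitive_element_of_the_form
    (K : Type u) [Field K] [Infinite K] (p : ℕ) (hp : p.Prime) [CharP K p]
    (m : ℕ) (q : ℕ) (hq : q = p ^ m)
    (S : Type u) [Field S] [Algebra K S] [FiniteDimensional K S]
    [Algebra.IsSeparable K S]
    (a : S) (ha : a ≠ 0) :
    ∃ s : S, IntermediateField.adjoin K {a * s ^ q} = ⊤ := by
  subst hq
  have : ExpChar K p := ExpChar.prime hp
  have : ExpChar S p := expChar_of_injective_algebraMap (algebraMap K S).injective p
  have : Finite (IntermediateField K S) :=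
    Field.finite_intermediateField_of_exists_primitive_element K S
      (Field.exists_primitive_element K S)
  by_contra! hne
  -- Otherwise the subspaces attached to the fields `K(a * s ^ q)`, all proper, cover `S`.
  obtain ⟨L, hL⟩ := Subspace.exists_eq_top_of_iUnion_eq_univ
    (p := fun L : {L : IntermediateField K S // L ≠ ⊤} => twistedPreimage p m a L.1) <|
    Set.eq_univ_of_forall fun s => Set.mem_iUnion.mpr
      ⟨⟨IntermediateField.adjoin K {a * s ^ p ^ m}, hne s⟩,
        IntermediateField.mem_adjoin_simple_self K (a * s ^ p ^ m)⟩
  exact twistedPreimage_ne_top p m ha L.2 hL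
end

section
/- Let k be a perfect field of characteristic p > 0 and let K/k be a finitely generated field extension of transcendence degree strictly less than r. Then there does not exist a purely inseparable field extension L/K of type (e₁, …, e_r) for any integers e₁ ≥ ⋯ ≥ e_r ≥ 1. -/
/-!
The proof compares two estimates of the degree `[L : L ^ p]`.

If `x_i` is normal of exponent `e_i ≥ 1` over `L_{i-1}`, then every `y : L` satisfies
`y ^ p ^ e_i ∈ L_{i-1}`, so `y ↦ y ^ p ^ (e_i - 1)` maps `L_{i-1}(L ^ p)` into `L_{i-1}`. Since it
does not map `x_i` there, `x_i ∉ L_{i-1}(L ^ p)` (`notMem_of_isNormalElem`). So successively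
adjoining `x_1, …, x_r` to `K(L ^ p)` multiplies the degree by `p` each time
(`relfinrank_rootChain`), and `p ^ r` divides `[L : L ^ p]`.

On the other side, `K` is finite over `F = k(t_1, …, t_n)` with `n < r`
(`exists_finite_over_adjoin`), and the degree over the field of `p`-th powers is invariant under
finite extensions (`relfinrank_frobenius`), so `[L : L ^ p] = [F : F ^ p]`. As `k` is perfect,
`F = F ^ p (t_1, …, t_n)`, so this degree is `p ^ d` with `d ≤ n`
(`exists_relfinrank_frobenius_eq`). Hence `r ≤ d ≤ n < r`, a contradiction.

Degrees are `Subfield.relfinrank`, taken inside the fixed field `L`; it is `0` for infinite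
degree, which is why non-vanishing of degrees of finite extensions is tracked.
-/

/-!
STATEMENT 16: Let k be a perfect field of characteristic p > 0 and K/k a
finitely generated field extension of transcendence degree < r. Then there is
no purely inseparable field extension L/K of type (e₁, …, e_r) with
e₁ ≥ ⋯ ≥ e_r ≥ 1.
-/

universe u

/-- Transcendence degree of `K` over `k`. -/
noncomputable def trdeg (k K : Type u) [CommRing k] [CommRing K] [Algebra k K] : Cardinal.{u} :=
  ⨆ s : { s : Set K // AlgebraicIndependent k ((↑) : s → K) }, Cardinal.mk s.1

/-- The purely inseparable extension `L/S` is of type `e`. -/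
def HasTypeE (S L : Type u) [Field S] [Field L] [Algebra S L] (p : ℕ) {r : ℕ}
    (e : Fin r → ℕ) : Prop :=
  ∃ x : Fin r → L, IsNormalGenSeqOfType S L p x e

/-- Adjoining a `p`-th root that is not already present gives degree exactly `p`. -/
lemma relfinrank_sup_closure_singleton {L : Type*} [Field L] {p : ℕ} (hp : p.Prime) [CharP L p]
    (A : Subfield L) {y : L} (hyp : y ^ p ∈ A) (hy : y ∉ A) :
    A.relfinrank (A ⊔ Subfield.closure {y}) = p := by
  have : Fact p.Prime := ⟨hp⟩
  rw [Subfield.relfinrank_eq_finrank_of_le le_sup_left]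
  have h1 : Subfield.extendScalars (le_sup_left : A ≤ A ⊔ Subfield.closure {y}) =
      IntermediateField.adjoin A {y} := by
    apply le_antisymm
    · change A ⊔ Subfield.closure {y} ≤ (IntermediateField.adjoin A {y}).toSubfield
      refine sup_le (fun a ha ↦ ?_) (Subfield.closure_le.2 ?_)
      · exact (IntermediateField.adjoin A {y}).algebraMap_mem ⟨a, ha⟩
      · exact IntermediateField.subset_adjoin A {y}
    · rw [IntermediateField.adjoin_le_iff]
      have : ({y} : Set L) ⊆ (A ⊔ Subfield.closure {y} : Subfield L) :=
        Subfield.subset_closure.trans (le_sup_right : _ ≤ A ⊔ Subfield.closure {y})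
      exact this
  have hirr : Irreducible (Polynomial.X ^ p - Polynomial.C (⟨y ^ p, hyp⟩ : A)) := by
    refine X_pow_sub_C_irreducible_of_prime hp fun b hb ↦ hy ?_
    have hb' : (b : L) ^ p = y ^ p := congrArg Subtype.val hb
    rw [← frobenius_inj L p hb']
    exact b.2
  have hroot : Polynomial.aeval y (Polynomial.X ^ p - Polynomial.C (⟨y ^ p, hyp⟩ : A)) = 0 := by
    simp only [map_sub, map_pow, Polynomial.aeval_X, Polynomial.aeval_C]
    exact sub_self _
  have hmonic : (Polynomial.X ^ p - Polynomial.C (⟨y ^ p, hyp⟩ : A)).Monic :=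
    Polynomial.monic_X_pow_sub_C _ hp.ne_zero
  have hint : IsIntegral A y := ⟨_, hmonic, hroot⟩
  rw [h1, IntermediateField.adjoin.finrank hint,
    ← minpoly.eq_of_irreducible_of_monic hirr hroot hmonic, Polynomial.natDegree_X_pow_sub_C]

/-- The subfield of `L` generated by `A` and the first `i` entries of the sequence `x`. -/
def rootChain {L : Type*} [Field L] (A : Subfield L) {r : ℕ} (x : Fin r → L) (i : ℕ) :
    Subfield L :=
  A ⊔ Subfield.closure (x '' {j | (j : ℕ) < i})

lemma rootChain_zero {L : Type*} [Field L] (A : Subfield L) {r : ℕ} (x : Fin r → L) :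
    rootChain A x 0 = A := by
  simp [rootChain]

lemma rootChain_succ {L : Type*} [Field L] (A : Subfield L) {r : ℕ} (x : Fin r → L) (i : Fin r) :
    rootChain A x (i + 1) = rootChain A x i ⊔ Subfield.closure {x i} := by
  have : {j : Fin r | (j : ℕ) < i + 1} = {j : Fin r | (j : ℕ) < i} ∪ {i} := by
    ext j
    simp only [Set.mem_ofPred_eq, Set.union_singleton, Set.mem_insert_iff, Fin.ext_iff]
    omega
  rw [rootChain, rootChain, this, Set.image_union, Set.image_singleton, Subfield.closure_union,
    sup_assoc]

lemma le_rootChain {L : Type*} [Field L] (A : Subfield L) {r : ℕ} (x : Fin r → L) (i : ℕ) :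
    A ≤ rootChain A x i := le_sup_left

/-- Adjoining `i` many `p`-th roots gives degree `p ^ d` with `d ≤ i`. -/
lemma exists_relfinrank_rootChain {L : Type*} [Field L] {p : ℕ} (hp : p.Prime) [CharP L p]
    (A : Subfield L) {r : ℕ} (x : Fin r → L) (hx : ∀ i, x i ^ p ∈ A) (i : ℕ) (hi : i ≤ r) :
    ∃ d ≤ i, A.relfinrank (rootChain A x i) = p ^ d := by
  induction i with
  | zero => exact ⟨0, le_rfl, by simp [rootChain_zero]⟩
  | succ i ih =>
    obtain ⟨d, hd, h⟩ := ih (by omega)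
    have hs := rootChain_succ A x ⟨i, hi⟩
    simp only at hs
    by_cases hmem : x ⟨i, hi⟩ ∈ rootChain A x i
    · refine ⟨d, by omega, ?_⟩
      rw [hs, sup_eq_left.2, h]
      simpa [Subfield.closure_le] using hmem
    · refine ⟨d + 1, by omega, ?_⟩
      rw [hs, ← Subfield.relfinrank_mul_relfinrank (le_rootChain A x i) le_sup_left, h,
        relfinrank_sup_closure_singleton hp _ (le_rootChain A x i (hx _)) hmem, pow_succ]

/-- If each root is new at its stage, the chain has degree exactly `p ^ i`. -/
lemma relfinrank_rootChain {L : Type*} [Field L] {p : ℕ} (hp : p.Prime) [CharP L p]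
    (A : Subfield L) {r : ℕ} (x : Fin r → L) (hx : ∀ i, x i ^ p ∈ A)
    (hx' : ∀ i : Fin r, x i ∉ rootChain A x i) (i : ℕ) (hi : i ≤ r) :
    A.relfinrank (rootChain A x i) = p ^ i := by
  induction i with
  | zero => simp [rootChain_zero]
  | succ i ih =>
    have hs := rootChain_succ A x ⟨i, hi⟩
    simp only at hs
    rw [hs, ← Subfield.relfinrank_mul_relfinrank (le_rootChain A x i) le_sup_left, ih (by omega),
        relfinrank_sup_closure_singleton hp _ (le_rootChain A x i (hx _)) (hx' ⟨i, hi⟩), pow_succ]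

/-- `[L : L ^ p] = [F : F ^ p]` for a finite extension `L / F`: both
`[L : F] [F : F ^ p]` and `[L : L ^ p] [L ^ p : F ^ p]` equal `[L : F ^ p]`, and Frobenius
gives `[L ^ p : F ^ p] = [L : F]`. -/
lemma relfinrank_frobenius {L : Type*} [Field L] (p : ℕ) [ExpChar L p] (F : Subfield L)
    (hF : F.relfinrank ⊤ ≠ 0) :
    (frobenius L p).fieldRange.relfinrank ⊤ = (F.map (frobenius L p)).relfinrank F := by
  have h1 : F.map (frobenius L p) ≤ F := by
    rintro _ ⟨a, ha, rfl⟩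
    exact pow_mem ha p
  have h2 : F.map (frobenius L p) ≤ (frobenius L p).fieldRange := by
    rw [RingHom.fieldRange_eq_map]
    exact (Subfield.gc_map_comap _).monotone_l le_top
  have h3 := Subfield.relfinrank_mul_relfinrank h1 (le_top : F ≤ ⊤)
  have h4 := Subfield.relfinrank_mul_relfinrank h2 le_top
  have h5 := Subfield.relfinrank_map_map F ⊤ (frobenius L p)
  rw [← RingHom.fieldRange_eq_map] at h5
  rw [← h3, h5, mul_comm] at h4
  exact mul_right_cancel₀ hF h4

/-- A finitely generated extension is finite over the field generated by some finite
transcendence basis, whose cardinality is bounded by the transcendence degree. -/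
lemma exists_finite_over_adjoin (k K : Type u) [Field k] [Field K] [Algebra k K]
    (hfg : (⊤ : IntermediateField k K).FG) {r : ℕ} (hlt : trdeg k K < (r : Cardinal)) :
    ∃ n < r, ∃ t : Fin n → K,
      FiniteDimensional (IntermediateField.adjoin k (Set.range t)) K := by
  obtain ⟨s, hs⟩ := exists_isTranscendenceBasis k K
  have hcard : Cardinal.mk s < r :=
    (le_ciSup (f := fun s : { s : Set K // AlgebraicIndependent k ((↑) : s → K) } ↦
      Cardinal.mk s.1) Cardinal.bddAbove_of_small ⟨s, hs.1⟩).trans_lt hlt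
  obtain ⟨n, hn⟩ := Cardinal.lt_aleph0.1 (hcard.trans (Cardinal.natCast_lt_aleph0))
  rw [hn, Nat.cast_lt] at hcard
  have hmk : Cardinal.mk (ULift.{u} (Fin n)) = Cardinal.mk s := by simp [hn]
  have e : Fin n ≃ s := Equiv.ulift.symm.trans (Cardinal.eq.1 hmk).some
  refine ⟨n, hcard, fun i ↦ e i, ?_⟩
  have hr : Set.range (fun i ↦ (e i : K)) = Set.range ((↑) : s → K) :=
    e.surjective.range_comp _
  rw [hr]
  have halg := hs.isAlgebraic_field
  obtain ⟨S, hS⟩ := hfg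
  set F := IntermediateField.adjoin k (Set.range ((↑) : s → K))
  have htop : IntermediateField.adjoin F (S : Set K) = ⊤ := by
    rw [← IntermediateField.restrictScalars_eq_top_iff (K := k), eq_top_iff, ← hS,
      IntermediateField.adjoin_le_iff]
    exact IntermediateField.subset_adjoin F (S : Set K)
  have hfin := IntermediateField.finiteDimensional_adjoin (K := F) (S := (S : Set K))
    fun x _ ↦ (halg.isAlgebraic x).isIntegral
  rw [htop] at hfin
  exact IntermediateField.topEquiv.toLinearEquiv.finiteDimensional

/-- Over a perfect field, a field generated by `n` elements has degree `p ^ d` over its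
`p`-th powers, with `d ≤ n`, and this is inherited by its finite extensions. -/
lemma exists_relfinrank_frobenius_eq (k : Type u) [Field k] {p : ℕ} (hp : p.Prime) [CharP k p]
    [PerfectField k] (K : Type u) [Field K] [Algebra k K] {n : ℕ} (t : Fin n → K)
    [FiniteDimensional (IntermediateField.adjoin k (Set.range t)) K]
    (L : Type u) [Field L] [Algebra K L] [FiniteDimensional K L] [ExpChar L p] [CharP L p] :
    ∃ d ≤ n, (frobenius L p).fieldRange.relfinrank ⊤ = p ^ d := by
  have : ExpChar k p := .prime hp
  have : PerfectRing k p := PerfectField.toPerfectRing p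
  set E := IntermediateField.adjoin k (Set.range t) with hE
  set F : Subfield L := E.toSubfield.map (algebraMap K L) with hF
  have hE0 : E.toSubfield.relfinrank ⊤ ≠ 0 := by
    rw [Subfield.relfinrank_top_right]
    exact (Module.finrank_pos (R := E) (M := K)).ne'
  have hK0 : (algebraMap K L).fieldRange.relfinrank ⊤ ≠ 0 := by
    rw [← IntermediateField.bot_toSubfield, Subfield.relfinrank_top_right]
    exact (Module.finrank_pos (R := (⊥ : IntermediateField K L)) (M := L)).ne'
  have hF0 : F.relfinrank ⊤ ≠ 0 := by
    have h1 := Subfield.relfinrank_map_map E.toSubfield ⊤ (algebraMap K L)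
    have h2 : F ≤ (algebraMap K L).fieldRange := by
      rw [RingHom.fieldRange_eq_map]
      exact (Subfield.gc_map_comap _).monotone_l le_top
    rw [← Subfield.relfinrank_mul_relfinrank h2 le_top, RingHom.fieldRange_eq_map, hF, h1,
      ← RingHom.fieldRange_eq_map]
    exact mul_ne_zero hE0 hK0
  rw [relfinrank_frobenius p F hF0]
  have htF (i) : algebraMap K L (t i) ∈ F :=
    ⟨t i, IntermediateField.subset_adjoin k _ ⟨i, rfl⟩, rfl⟩
  have hFchain : rootChain (F.map (frobenius L p)) (fun i ↦ algebraMap K L (t i)) n = F := by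
    apply le_antisymm
    · refine sup_le ?_ (Subfield.closure_le.2 ?_)
      · rintro _ ⟨a, ha, rfl⟩
        exact pow_mem ha p
      · rintro _ ⟨i, -, rfl⟩
        exact htF i
    -- `k` is perfect, so it lies in the `p`-th powers of `F`; only the `t i` have to be adjoined.
    · rw [hF, Subfield.map_le_iff_le_comap, hE]
      refine Subfield.closure_le.2 (Set.union_subset ?_ ?_)
      · rintro _ ⟨c, rfl⟩
        obtain ⟨b, rfl⟩ := surjective_frobenius k p c
        refine le_rootChain _ _ _
          ⟨algebraMap K L (algebraMap k K b), ⟨_, E.algebraMap_mem b, rfl⟩, ?_⟩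
        simp [frobenius_def]
      · rintro _ ⟨i, rfl⟩
        exact (le_sup_right : _ ≤ rootChain _ _ n) (Subfield.subset_closure ⟨i, i.2, rfl⟩)
  obtain ⟨d, hd, h⟩ := exists_relfinrank_rootChain hp (F.map (frobenius L p))
    (fun i ↦ algebraMap K L (t i)) (fun i ↦ ⟨_, htF i, rfl⟩) n le_rfl
  rw [hFchain] at h
  exact ⟨d, hd, h⟩

/-- Pure inseparability makes the infimum defining the exponent an attained minimum. -/
lemma pow_pexp_mem (S L : Type u) [Field S] [Field L] [Algebra S L] (p : ℕ) [ExpChar S p]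
    [IsPurelyInseparable S L] (y : L) : y ^ p ^ pexp S L p y ∈ (algebraMap S L).range :=
  Nat.sInf_mem (s := { e : ℕ | y ^ p ^ e ∈ (algebraMap S L).range })
    (IsPurelyInseparable.pow_mem S p y)

/-- The key step: for a normal element `z` of exponent `e ≥ 1` over `N`, the power map
`y ↦ y ^ p ^ (e - 1)` sends `N` and all `p`-th powers into `N`, but not `z`; hence
`z ∉ N(L ^ p)`. -/
lemma notMem_of_isNormalElem {K L : Type u} [Field K] [Field L] [Algebra K L] {p : ℕ}
    [ExpChar K p] [ExpChar L p] [IsPurelyInseparable K L] (N : IntermediateField K L) {z : L}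
    (hz : IsNormalElem N L p z) (hz1 : 1 ≤ pexp N L p z) :
    z ∉ (frobenius L p).fieldRange ⊔ N.toSubfield := by
  intro hmem
  have : ExpChar N p := expChar_of_injective_algebraMap (algebraMap K N).injective p
  obtain ⟨e, he⟩ : ∃ e, pexp N L p z = e + 1 := ⟨_, (Nat.sub_add_cancel hz1).symm⟩
  have hle : (frobenius L p).fieldRange ⊔ N.toSubfield ≤
      N.toSubfield.comap (iterateFrobenius L p e) := by
    refine sup_le ?_ ?_
    · rintro _ ⟨y, rfl⟩
      obtain ⟨a, ha⟩ := pow_pexp_mem N L p y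
      have hy := hz y
      have h1 : y ^ p ^ pexp N L p y ∈ N := ha ▸ a.2
      have h2 : y ^ p ^ (e + 1) ∈ N := by
        obtain ⟨m, hm⟩ := Nat.exists_eq_add_of_le (he ▸ hy)
        rw [hm, pow_add, pow_mul]
        exact pow_mem h1 _
      change iterateFrobenius L p e (frobenius L p y) ∈ N
      rw [iterateFrobenius_def, frobenius_def, ← pow_mul, ← pow_succ']
      exact h2
    · intro y hy
      change iterateFrobenius L p e y ∈ N
      rw [iterateFrobenius_def]
      exact pow_mem hy _
  have hz' : z ^ p ^ e ∈ N := by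
    rw [← iterateFrobenius_def]
    exact hle hmem
  have : pexp N L p z ≤ e := Nat.sInf_le ⟨⟨_, hz'⟩, rfl⟩
  omega

theorem no_purelyInseparable_extension_of_type
    (k : Type u) [Field k] (p : ℕ) (hp : p.Prime) [CharP k p] [PerfectField k]
    (K : Type u) [Field K] [Algebra k K]
    (hfg : (⊤ : IntermediateField k K).FG)
    {r : ℕ} (hr : 0 < r) (e : Fin r → ℕ) (he : Antitone e) (he1 : ∀ i, 1 ≤ e i)
    (hlt : trdeg k K < (r : Cardinal))
    (L : Type u) [Field L] [Algebra K L]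
    [FiniteDimensional K L] [IsPurelyInseparable K L] :
    ¬ HasTypeE K L p e := by
  rintro ⟨x, hx, -⟩
  have : Fact p.Prime := ⟨hp⟩
  have : CharP K p := charP_of_injective_algebraMap (algebraMap k K).injective p
  have : CharP L p := charP_of_injective_algebraMap (algebraMap K L).injective p
  have : ExpChar K p := .prime hp
  have : ExpChar L p := .prime hp
  obtain ⟨n, hn, t, ht⟩ := exists_finite_over_adjoin k K hfg hlt
  obtain ⟨d, hd, hdeg⟩ := exists_relfinrank_frobenius_eq k hp K t L
  set A : Subfield L := (frobenius L p).fieldRange ⊔ (algebraMap K L).fieldRange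
  have hxA (i) : x i ^ p ∈ A := (le_sup_left : _ ≤ A) ⟨x i, rfl⟩
  have hnew (i : Fin r) : x i ∉ rootChain A x i := by
    obtain ⟨-, h1, h2⟩ := hx i
    refine fun hmem ↦ notMem_of_isNormalElem (prevField K L x i) h1 (h2 ▸ he1 i) ?_
    refine (sup_le (sup_le le_sup_left (le_sup_of_le_right ?_))
      (le_sup_of_le_right (Subfield.closure_le.2 ?_)) : rootChain A x i ≤ _) hmem
    · rintro _ ⟨a, rfl⟩
      exact (prevField K L x i).algebraMap_mem a
    · exact IntermediateField.subset_adjoin K _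
  have h3 : p ^ r ∣ p ^ d := by
    rw [← hdeg, ← Subfield.relfinrank_mul_relfinrank (le_sup_left : _ ≤ A) le_top,
      ← Subfield.relfinrank_mul_relfinrank (le_rootChain A x r) le_top,
      relfinrank_rootChain hp A x hxA hnew r le_rfl]
    exact dvd_mul_of_dvd_right (dvd_mul_right _ _) _
  have := (Nat.pow_dvd_pow_iff_le_right hp.one_lt).1 h3
  omega
end
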